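/- Chevalley's theorem (special case): Let K be an algebraically closed field and f = (f₁,…,fₙ) : Kᵐ → Kⁿ a polynomial map. Then the image of f is a constructible subset of Kⁿ in the Zariski topology. -/

import Mathlib

open MvPolynomial

/-- The Zariski topology on affine space `Fin n → K`. -/
def zariskiTopology (K : Type*) [CommRing K] (n : ℕ) :
    TopologicalSpace (Fin n → K) :=
  TopologicalSpace.generateFrom
    {U | ∃ p : MvPolynomial (Fin n) K, U = {x | eval x p ≠ 0}}

/-- A constructible set: a finite union of locally closed sets (in the Zariski
topology). -/
def IsZariskiConstructible {K : Type*} [CommRing K] {n : ℕ}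
    (C : Set (Fin n → K)) : Prop :=
  letI := zariskiTopology K n
  ∃ (m : ℕ) (u : Fin m → Set (Fin n → K)),
    (∀ i, IsLocallyClosed (u i)) ∧ C = ⋃ i, u i

/- Sending a point `x` to the kernel of evaluation at `x` identifies `Kⁿ`, with its Zariski
topology, with the subspace of closed points of `Spec K[X₁, …, Xₙ]` (Nullstellensatz), and a
polynomial map with the restriction of a morphism of spectra, whose images of constructible sets
are constructible by the scheme-theoretic Chevalley theorem. Nothing is lost by looking at closed
points only: the part of the fibre over a closed point lying in a locally closed set is again
locally closed, so if it is nonempty it contains a closed point, because polynomial rings over a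
field are Jacobson. -/

section Constructible

open Topology TopologicalSpace

variable {X : Type*} [TopologicalSpace X]

theorem isRetrocompact_of_noetherianSpace [NoetherianSpace X] (s : Set X) : IsRetrocompact s :=
  fun _ _ _ ↦ NoetherianSpace.isCompact _

theorem isConstructible_of_isLocallyClosed [NoetherianSpace X] {s : Set X}
    (hs : IsLocallyClosed s) : IsConstructible s := by
  obtain ⟨U, Z, hU, hZ, rfl⟩ := hs
  have hZc : IsConstructible Zᶜ :=
    (isRetrocompact_of_noetherianSpace Zᶜ).isConstructible hZ.isOpen_compl
  exact ((isRetrocompact_of_noetherianSpace U).isConstructible hU).inter hZc.of_compl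

theorem exists_eq_iUnion_isLocallyClosed_of_isConstructible {s : Set X} (hs : IsConstructible s) :
    ∃ (r : ℕ) (u : Fin r → Set X), (∀ i, IsLocallyClosed (u i)) ∧ s = ⋃ i, u i := by
  have hlattice : IsSublattice {U : Set X | IsOpen U ∧ IsRetrocompact U} :=
    { supClosed := fun _ hU _ hV ↦ ⟨hU.1.union hV.1, hU.2.union hV.2⟩
      infClosed := fun _ hU _ hV ↦ ⟨hU.1.inter hV.1, hU.2.inter_isOpen hV.2 hV.1⟩ }
  obtain ⟨t, rfl⟩ := (BooleanSubalgebra.mem_closure_iff_sup_sdiff hlattice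
    ⟨isOpen_empty, .empty⟩ ⟨isOpen_univ, .univ⟩).1 hs
  let e := t.equivFin.symm
  refine ⟨t.card, fun i ↦ ((e i).1.1 : Set X) \ (e i).1.2, fun i ↦ ?_, ?_⟩
  · exact (e i).1.1.2.1.isLocallyClosed.inter (e i).1.2.2.1.isClosed_compl.isLocallyClosed
  · rw [Finset.sup_eq_iSup, iSup_subtype', ← e.iSup_comp]
    rfl

end Constructible

section PointToPoint

variable {k K σ τ : Type*} [Field k] [Field K] [Algebra k K]

theorem mem_asIdeal_pointToPoint {x : σ → K} {p : MvPolynomial σ k} :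
    p ∈ (pointToPoint x : PrimeSpectrum (MvPolynomial σ k)).asIdeal ↔ aeval x p = 0 :=
  mem_vanishingIdeal_singleton_iff x p

theorem preimage_pointToPoint_basicOpen (p : MvPolynomial σ k) :
    (pointToPoint ⁻¹' (PrimeSpectrum.basicOpen p).1 : Set (σ → K)) = {x | aeval x p ≠ 0} :=
  Set.ext fun _ ↦ mem_asIdeal_pointToPoint.not

theorem comap_aeval_pointToPoint (f : τ → MvPolynomial σ k) (x : σ → K) :
    PrimeSpectrum.comap (aeval f : MvPolynomial τ k →ₐ[k] MvPolynomial σ k).toRingHom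
      (pointToPoint x) = pointToPoint fun i ↦ aeval x (f i) := by
  ext p
  change aeval f p ∈ (pointToPoint x).asIdeal ↔ p ∈ (pointToPoint _).asIdeal
  rw [mem_asIdeal_pointToPoint, mem_asIdeal_pointToPoint, comp_aeval_apply]

theorem pointToPoint_injective :
    Function.Injective (pointToPoint : (σ → K) → PrimeSpectrum (MvPolynomial σ K)) := by
  intro x y hxy
  funext i
  have hx : X i - C (x i) ∈ (pointToPoint x : PrimeSpectrum (MvPolynomial σ K)).asIdeal := by
    simp [mem_asIdeal_pointToPoint]
  rw [hxy, mem_asIdeal_pointToPoint] at hx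
  simpa [sub_eq_zero, eq_comm] using hx

theorem isClosed_singleton_pointToPoint (x : σ → K) :
    IsClosed {(pointToPoint x : PrimeSpectrum (MvPolynomial σ K))} :=
  (PrimeSpectrum.isClosed_singleton_iff_isMaximal _).2
    (inferInstanceAs (vanishingIdeal K {x}).IsMaximal)

theorem range_pointToPoint [IsAlgClosed K] [Finite σ] :
    Set.range (pointToPoint : (σ → K) → PrimeSpectrum (MvPolynomial σ K)) = closedPoints _ := by
  refine Set.Subset.antisymm (Set.range_subset_iff.2 fun x ↦ isClosed_singleton_pointToPoint x) ?_
  intro P hP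
  obtain ⟨x, hx⟩ := eq_vanishingIdeal_singleton_of_isMaximal K
    ((PrimeSpectrum.isClosed_singleton_iff_isMaximal P).1 hP)
  exact ⟨x, PrimeSpectrum.ext hx.symm⟩

theorem image_preimage_pointToPoint [IsAlgClosed K] [Finite σ]
    (f : τ → MvPolynomial σ K) {S : Set (PrimeSpectrum (MvPolynomial σ K))}
    (hS : IsLocallyClosed S) :
    (fun (x : σ → K) i ↦ eval x (f i)) '' (pointToPoint ⁻¹' S) =
      pointToPoint ⁻¹'
        (PrimeSpectrum.comap
          (aeval f : MvPolynomial τ K →ₐ[K] MvPolynomial σ K).toRingHom '' S) := by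
  set φ := PrimeSpectrum.comap (aeval f : MvPolynomial τ K →ₐ[K] MvPolynomial σ K).toRingHom
  have hφ (x : σ → K) : φ (pointToPoint x) = pointToPoint fun i ↦ eval x (f i) :=
    comap_aeval_pointToPoint f x
  ext y
  constructor
  · rintro ⟨x, hx, rfl⟩
    exact ⟨pointToPoint x, hx, hφ x⟩
  · rintro ⟨P, hPS, hPy⟩
    have hfibre : IsLocallyClosed (S ∩ φ ⁻¹' {pointToPoint y}) :=
      hS.inter ((isClosed_singleton_pointToPoint y).preimage
        (PrimeSpectrum.continuous_comap _)).isLocallyClosed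
    obtain ⟨Q, ⟨hQS, hQy⟩, hQ⟩ := nonempty_inter_closedPoints ⟨P, And.intro hPS hPy⟩ hfibre
    obtain ⟨x, rfl⟩ := range_pointToPoint.superset hQ
    exact ⟨x, hQS, pointToPoint_injective ((hφ x).symm.trans hQy)⟩

end PointToPoint

theorem isConstructible_comap_image_of_finiteType {R A B : Type*} [CommRing R] [CommRing A]
    [CommRing B] [Algebra R A] [Algebra R B] [IsNoetherianRing A] [Algebra.FiniteType R B]
    (φ : A →ₐ[R] B) {S : Set (PrimeSpectrum B)} (hS : Topology.IsConstructible S) :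
    Topology.IsConstructible (PrimeSpectrum.comap φ.toRingHom '' S) := by
  have hRB : (φ.comp (Algebra.ofId R A)).FiniteType := by
    rw [Subsingleton.elim (φ.comp (Algebra.ofId R A)) (Algebra.ofId R B)]
    exact RingHom.finiteType_algebraMap.2 inferInstance
  exact PrimeSpectrum.isConstructible_comap_image
    (AlgHom.FinitePresentation.of_finiteType.1 hRB.of_comp_finiteType) hS

section Zariski

open Topology TopologicalSpace

variable {K : Type*} [Field K] {n : ℕ}

theorem isInducing_pointToPoint :
    @IsInducing (Fin n → K) (PrimeSpectrum (MvPolynomial (Fin n) K)) (zariskiTopology K n) _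
      pointToPoint := by
  let := zariskiTopology K n
  refine ⟨?_⟩
  rw [PrimeSpectrum.isTopologicalBasis_basic_opens.eq_generateFrom, induced_generateFrom_eq,
    ← Set.range_comp]
  refine congrArg generateFrom (Set.ext fun U ↦ exists_congr fun p ↦ ?_)
  exact eq_comm.trans (Eq.congr_left (preimage_pointToPoint_basicOpen p).symm)

theorem noetherianSpace_zariskiTopology (K : Type*) [Field K] (n : ℕ) :
    @NoetherianSpace (Fin n → K) (zariskiTopology K n) :=
  let := zariskiTopology K n
  isInducing_pointToPoint.noetherianSpace

theorem isZariskiConstructible_iff_isConstructible {C : Set (Fin n → K)} :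
    IsZariskiConstructible C ↔ @IsConstructible _ (zariskiTopology K n) C := by
  let := zariskiTopology K n
  have := noetherianSpace_zariskiTopology K n
  refine ⟨?_, exists_eq_iUnion_isLocallyClosed_of_isConstructible⟩
  rintro ⟨r, u, hu, rfl⟩
  exact .iUnion fun i ↦ isConstructible_of_isLocallyClosed (hu i)

theorem isConstructible_preimage_pointToPoint
    {S : Set (PrimeSpectrum (MvPolynomial (Fin n) K))} (hS : IsConstructible S) :
    @IsConstructible (Fin n → K) (zariskiTopology K n) (pointToPoint ⁻¹' S) := by
  let := zariskiTopology K n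
  have := noetherianSpace_zariskiTopology K n
  exact hS.preimage isInducing_pointToPoint.continuous fun _ _ _ ↦
    isRetrocompact_of_noetherianSpace _

theorem isZariskiConstructible_univ {R : Type*} [CommRing R] :
    IsZariskiConstructible (Set.univ : Set (Fin n → R)) :=
  let := zariskiTopology R n
  exists_eq_iUnion_isLocallyClosed_of_isConstructible .univ

end Zariski

theorem stmt11_general {K : Type*} [Field K] [IsAlgClosed K] {m n : ℕ}
    (f : Fin n → MvPolynomial (Fin m) K) {C : Set (Fin m → K)} (hC : IsZariskiConstructible C) :
    IsZariskiConstructible ((fun (x : Fin m → K) i ↦ eval x (f i)) '' C) := by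
  let := zariskiTopology K m
  let := zariskiTopology K n
  obtain ⟨r, u, hu, rfl⟩ := hC
  rw [Set.image_iUnion, isZariskiConstructible_iff_isConstructible]
  refine .iUnion fun i ↦ ?_
  obtain ⟨S, hS, hSu⟩ := isInducing_pointToPoint.isLocallyClosed_iff.1 (hu i)
  rw [← hSu, image_preimage_pointToPoint f hS]
  exact isConstructible_preimage_pointToPoint <|
    isConstructible_comap_image_of_finiteType _ (isConstructible_of_isLocallyClosed hS)

/-- special case of Chevalley's theorem: over an algebraically
closed field, the image of a polynomial map `f : Kᵐ → Kⁿ` is a constructible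
subset of `Kⁿ`. -/
theorem stmt11 (K : Type*) [Field K] [IsAlgClosed K] (m n : ℕ)
    (f : Fin n → MvPolynomial (Fin m) K) :
    IsZariskiConstructible
      (Set.range (fun x : Fin m → K => fun i => eval x (f i))) := by
  rw [← Set.image_univ]
  exact stmt11_general f isZariskiConstructible_univ
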